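/- Every function g : ℝ → ℝ whose graph {(x, g x) : x ∈ ℝ} is ℚ-linearly independent in ℝ² can be written as a composition g = h ∘ f of two Hamel functions h, f : ℝ → ℝ. -/

import Mathlib

/-- The graph of a function `f : ℝ → ℝ`, as a subset of `ℝ × ℝ`. -/
def graph (f : ℝ → ℝ) : Set (ℝ × ℝ) := Set.range fun x => (x, f x)

/-- `f : ℝ → ℝ` is a Hamel function if its graph is a basis of `ℝ × ℝ`
as a vector space over `ℚ`, i.e. the graph is `ℚ`-linearly independent and
spans `ℝ × ℝ` over `ℚ`. -/
def IsHamelFunction (f : ℝ → ℝ) : Prop :=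
  LinearIndependent ℚ ((↑) : graph f → ℝ × ℝ) ∧
    Submodule.span ℚ (graph f) = ⊤

/-!
Suppose `f` is injective with spanning range, the vectors `(f x, g x)` are linearly independent, and
`f` misses as many points as the quotient of the plane by the span of these vectors has dimensions.
Then `g = h ∘ f` forces `h` on the range of `f`, and at the missed points `y` one chooses `h y` so
that the `(y, h y)` represent a basis of the quotient; this `h` is Hamel. It remains to find such an
`f` among the Hamel functions.

A linear section `s` of the evaluation map `V →₀ k → V` splits `V →₀ k` into `V` and the space of
linear relations, and any isomorphism `Φ` of the relations with `V` yields the Hamel function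
`f x = Φ ([x] - s x)`. All its properties are arranged by choosing `s`: it takes values in the
kernel of the linear extension of some injective `u`, which makes `f` injective and makes it miss
`f x + Φ c` for each relation `c ≠ 0` killed by `u`; and a projection of the linear extension of
`g` along `s` is prescribed, which controls the vectors `(f x, g x)`. The function `u` is `± id`,
with signs chosen so that it is odd (so `u` kills the many relations `[x] + [-x]`) although its
graph spans `V × V` (so that `s` exists).
-/

open Cardinal
open Function (Injective Surjective Bijective)

section GraphMap

variable {k V W : Type*} [DivisionRing k] [AddCommGroup V] [Module k V]
  [AddCommGroup W] [Module k W]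

/-- The linear extension of `x ↦ (x, f x)` to the space `V →₀ k` of formal linear combinations of
vectors: the graph of `f` is linearly independent iff it is injective, and spans iff it is
surjective. -/
noncomputable def graphMap (k : Type*) [DivisionRing k] [Module k V] [Module k W] (f : V → W) :
    (V →₀ k) →ₗ[k] V × W :=
  Finsupp.linearCombination k fun x => (x, f x)

theorem graphMap_apply (f : V → W) (v : V →₀ k) :
    graphMap k f v = (Finsupp.linearCombination k id v, Finsupp.linearCombination k f v) := by
  simp only [graphMap, Finsupp.linearCombination_apply, Finsupp.sum]
  ext <;> simp [Prod.fst_sum, Prod.snd_sum]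

theorem graphMap_eq_iff {f : V → W} {v : V →₀ k} {p : V × W} :
    graphMap k f v = p ↔
      Finsupp.linearCombination k id v = p.1 ∧ Finsupp.linearCombination k f v = p.2 := by
  rw [graphMap_apply, Prod.ext_iff]

/-- Hamel functions between arbitrary vector spaces: the vectors `(x, f x)` form a basis of
`V × W`. -/
def IsHamelMap (k : Type*) [DivisionRing k] [Module k V] [Module k W] (f : V → W) : Prop :=
  LinearIndependent k (fun x => (x, f x)) ∧ Submodule.span k (Set.range fun x => (x, f x)) = ⊤

theorem isHamelMap_iff_bijective_graphMap {f : V → W} :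
    IsHamelMap k f ↔ Bijective (graphMap k f) := by
  rw [IsHamelMap, Bijective, ← LinearMap.range_eq_top, graphMap, Finsupp.range_linearCombination]
  rfl

theorem IsHamelMap.span_range_eq_top {f : V → W} (hf : IsHamelMap k f) :
    Submodule.span k (Set.range f) = ⊤ := by
  have h := congrArg (Submodule.map (LinearMap.snd k V W)) hf.2
  rwa [Submodule.map_span, ← Set.range_comp, Submodule.map_top,
    LinearMap.range_eq_top.2 Prod.snd_surjective] at h

end GraphMap

section Extension

variable {k V W ι κ : Type*} [DivisionRing k] [AddCommGroup V] [Module k V]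
  [AddCommGroup W] [Module k W]

theorem linearIndependent_sumElim_of_mkQ {a : ι → V} {d : κ → V} (ha : LinearIndependent k a)
    (hd : LinearIndependent k ((Submodule.span k (Set.range a)).mkQ ∘ d)) :
    LinearIndependent k (Sum.elim a d) :=
  .sumElim_of_quotient (linearIndependent_span ha) d hd

theorem span_range_sumElim_eq_top_of_mkQ {a : ι → V} {d : κ → V}
    (hd : Submodule.span k (Set.range ((Submodule.span k (Set.range a)).mkQ ∘ d)) = ⊤) :
    Submodule.span k (Set.range (Sum.elim a d)) = ⊤ := by
  rwa [Set.range_comp, Submodule.span_image, Submodule.map_mkQ_eq_top, ← Submodule.span_union,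
    ← Set.Sum.elim_range] at hd

theorem exists_mkQ_prodMk_eq {A : Submodule k (V × W)}
    (hA : A.map (LinearMap.fst k V W) = ⊤) (y : V) (c : (V × W) ⧸ A) :
    ∃ z : W, A.mkQ (y, z) = c := by
  obtain ⟨⟨y', z'⟩, rfl⟩ := A.mkQ_surjective c
  obtain ⟨⟨_, z⟩, hz, rfl⟩ : y - y' ∈ A.map (LinearMap.fst k V W) := hA ▸ Submodule.mem_top
  refine ⟨z' + z, (Submodule.Quotient.eq A).2 ?_⟩
  simpa using hz

theorem exists_isHamelMap_comp_eq {f : ι → V} {g : ι → W} (hf : Injective f)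
    (hfg : LinearIndependent k fun i => (f i, g i)) (hspan : Submodule.span k (Set.range f) = ⊤)
    (b : Module.Basis ↥(Set.range f)ᶜ k
      ((V × W) ⧸ Submodule.span k (Set.range fun i => (f i, g i)))) :
    ∃ h : V → W, IsHamelMap k h ∧ g = h ∘ f := by
  classical
  have hfst : (Submodule.span k (Set.range fun i => (f i, g i))).map (LinearMap.fst k V W) = ⊤ := by
    rw [Submodule.map_span, ← Set.range_comp]
    exact hspan
  choose d hd using fun y : ↥(Set.range f)ᶜ => exists_mkQ_prodMk_eq hfst y (b y)
  let e : ι ⊕ ↥(Set.range f)ᶜ ≃ V :=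
    ((Equiv.ofInjective f hf).sumCongr (.refl _)).trans (Equiv.Set.sumCompl (Set.range f))
  let h : V → W := Sum.elim g d ∘ e.symm
  have h_e (i) : h (e i) = Sum.elim g d i := congrArg _ (e.symm_apply_apply i)
  have graph_comp : (fun x => (x, h x)) ∘ e =
      Sum.elim (fun i => (f i, g i)) (fun y : ↥(Set.range f)ᶜ => ((y : V), d y)) := by
    funext i
    rcases i with i | y
    · exact Prod.ext rfl (h_e (.inl i))
    · exact Prod.ext rfl (h_e (.inr y))
  refine ⟨h, ⟨?_, ?_⟩, funext fun i => (h_e (.inl i)).symm⟩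
  · rw [← linearIndependent_equiv e, graph_comp]
    refine linearIndependent_sumElim_of_mkQ hfg ?_
    convert b.linearIndependent
    exact funext hd
  · rw [← e.surjective.range_comp, graph_comp]
    refine span_range_sumElim_eq_top_of_mkQ ?_
    convert b.span_eq
    exact funext hd

end Extension

section Lift

variable {k U V W X Z : Type*} [DivisionRing k] [AddCommGroup U] [Module k U] [AddCommGroup V]
  [Module k V] [AddCommGroup W] [Module k W] [AddCommGroup X] [Module k X] [AddCommGroup Z]
  [Module k Z]

theorem exists_lift_of_disjoint_ker {α : U →ₗ[k] X} (hα : Surjective α) {G : U →ₗ[k] W}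
    (hG : Disjoint (LinearMap.ker α) (LinearMap.ker G)) (Ψ : LinearMap.ker α ≃ₗ[k] Z)
    (T : V →ₗ[k] X) (j : V →ₗ[k] Z) :
    ∃ (s : V →ₗ[k] U) (P : W →ₗ[k] Z), (∀ x, α (s x) = T x) ∧ Surjective P ∧
      ∀ x, P (G (s x)) = j x := by
  let i : Z →ₗ[k] U := (LinearMap.ker α).subtype ∘ₗ Ψ.symm.toLinearMap
  have hαi (z) : α (i z) = 0 := (Ψ.symm z).2
  have hGi : LinearMap.ker (G ∘ₗ i) = ⊥ := by
    refine LinearMap.ker_eq_bot'.2 fun z hz => ?_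
    exact Ψ.symm.map_eq_zero_iff.1 (Subtype.ext (Submodule.disjoint_def.1 hG _ (hαi z) hz))
  obtain ⟨P, hP⟩ := (G ∘ₗ i).exists_leftInverse_of_injective hGi
  have hPGi (z) : P (G (i z)) = z := LinearMap.congr_fun hP z
  obtain ⟨r, hr⟩ := α.exists_rightInverse_of_surjective (LinearMap.range_eq_top.2 hα)
  have hαr (x) : α (r x) = x := LinearMap.congr_fun hr x
  -- Adding elements of `ker α` to the lift `r ∘ T` changes `P ∘ G` at will, as `P ∘ G ∘ i = id`.
  refine ⟨r ∘ₗ T + i ∘ₗ (j - P ∘ₗ G ∘ₗ r ∘ₗ T), P, fun x => ?_, fun z => ⟨G (i z), hPGi z⟩,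
    fun x => ?_⟩
  · simp only [LinearMap.add_apply, LinearMap.comp_apply, map_add, hαr, hαi, add_zero]
  · simp only [LinearMap.add_apply, LinearMap.sub_apply, LinearMap.comp_apply, map_add, hPGi,
      add_sub_cancel]

end Lift

section HamelOfSection

variable {k V W W' : Type*} [DivisionRing k] [AddCommGroup V] [Module k V] [AddCommGroup W]
  [Module k W] [AddCommGroup W'] [Module k W']

/-- The linear relations among all vectors of `V`. -/
noncomputable def relations (k V : Type*) [DivisionRing k] [AddCommGroup V] [Module k V] :
    Submodule k (V →₀ k) :=
  LinearMap.ker (Finsupp.linearCombination k id)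

theorem ker_graphMap_le_relations (f : V → W) :
    LinearMap.ker (graphMap k f) ≤ relations k V :=
  fun _ hv => (graphMap_eq_iff.1 hv).1

theorem disjoint_ker_graphMap_ker_linearCombination {u : V → W'} {g : V → W}
    (hg : LinearIndependent k fun x => (x, g x)) :
    Disjoint (LinearMap.ker (graphMap k u)) (LinearMap.ker (Finsupp.linearCombination k g)) :=
  Submodule.disjoint_def.2 fun v hu hgv =>
    linearIndependent_iff.1 hg v (graphMap_eq_iff.2 ⟨(graphMap_eq_iff.1 hu).1, hgv⟩)

variable {s : V →ₗ[k] V →₀ k} (hs : ∀ x, Finsupp.linearCombination k id (s x) = x)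

/-- The projection of `V →₀ k` onto the linear relations along the range of a section `s` of the
evaluation map. -/
noncomputable def relationPart : (V →₀ k) →ₗ[k] relations k V :=
  LinearMap.codRestrict (relations k V)
    (LinearMap.id - s ∘ₗ Finsupp.linearCombination k id) fun v => by simp [relations, hs]

theorem coe_relationPart (v : V →₀ k) :
    (relationPart hs v : V →₀ k) = v - s (Finsupp.linearCombination k id v) :=
  rfl

theorem relationPart_coe (c : relations k V) : relationPart hs c = c := by
  ext1
  rw [coe_relationPart, LinearMap.mem_ker.1 c.2, map_zero, sub_zero]

theorem relationPart_section (x : V) : relationPart hs (s x) = 0 := by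
  ext1
  rw [coe_relationPart, hs, sub_self, Submodule.coe_zero]

variable (Φ : relations k V ≃ₗ[k] W)

/-- The function `x ↦ Φ ([x] - s x)`, whose linear extension is `Φ` on the linear relations and
vanishes on the range of the section `s`. -/
noncomputable def hamelOfSection (x : V) : W :=
  Φ (relationPart hs (Finsupp.single x 1))

theorem linearCombination_hamelOfSection (v : V →₀ k) :
    Finsupp.linearCombination k (hamelOfSection hs Φ) v = Φ (relationPart hs v) := by
  suffices Finsupp.linearCombination k (hamelOfSection hs Φ) = Φ.toLinearMap ∘ₗ relationPart hs from
    LinearMap.congr_fun this v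
  ext x
  simp [hamelOfSection]

theorem isHamelMap_hamelOfSection : IsHamelMap k (hamelOfSection hs Φ) := by
  refine isHamelMap_iff_bijective_graphMap.2
    ⟨(injective_iff_map_eq_zero _).2 fun v hv => ?_, fun ⟨x, y⟩ => ?_⟩
  · obtain ⟨hv_eval, hv_rel⟩ := graphMap_eq_iff.1 hv
    rw [linearCombination_hamelOfSection, Prod.snd_zero, Φ.map_eq_zero_iff] at hv_rel
    simpa [hv_rel, hv_eval] using (coe_relationPart hs v).symm
  · refine ⟨s x + Φ.symm y, graphMap_eq_iff.2 ⟨?_, ?_⟩⟩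
    · rw [map_add, hs, LinearMap.mem_ker.1 (Φ.symm y).2, add_zero]
    · rw [linearCombination_hamelOfSection, map_add, relationPart_section, relationPart_coe,
        zero_add, Φ.apply_symm_apply]

section Separating

variable {u : V → W'} (hu : Injective u) (hus : ∀ x, Finsupp.linearCombination k u (s x) = 0)
include hu hus

theorem eq_of_hamelOfSection_eq_add {x y : V} {c : relations k V}
    (hc : Finsupp.linearCombination k u c = 0)
    (h : hamelOfSection hs Φ x = hamelOfSection hs Φ y + Φ c) : x = y := by
  have hrel : relationPart hs (.single x 1) = relationPart hs (.single y 1) + c :=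
    Φ.injective (h.trans (map_add Φ _ _).symm)
  have hu_rel := congrArg (fun c : relations k V => Finsupp.linearCombination k u c) hrel
  exact hu (by simpa [coe_relationPart, hus, hc] using hu_rel)

theorem hamelOfSection_injective : Injective (hamelOfSection hs Φ) := fun x y h =>
  eq_of_hamelOfSection_eq_add hs Φ hu hus (c := 0) (map_zero _) (by simpa using h)

theorem hamelOfSection_add_notMem_range {c : relations k V} (hc₀ : c ≠ 0)
    (hc : Finsupp.linearCombination k u c = 0) (x : V) :
    hamelOfSection hs Φ x + Φ c ∉ Set.range (hamelOfSection hs Φ) := by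
  rintro ⟨y, hy⟩
  obtain rfl := eq_of_hamelOfSection_eq_add hs Φ hu hus hc hy
  simp [hc₀] at hy

end Separating

theorem linearIndependent_hamelOfSection_prodMk {g : V → W'}
    (hgs : Injective fun x => Finsupp.linearCombination k g (s x)) :
    LinearIndependent k fun x => (hamelOfSection hs Φ x, g x) := by
  refine linearIndependent_iff.2 fun v hv => ?_
  have hv_rel : relationPart hs v = 0 := by
    have h := congrArg (LinearMap.fst k W W') hv
    rw [Finsupp.apply_linearCombination] at h
    exact Φ.map_eq_zero_iff.1 ((linearCombination_hamelOfSection hs Φ v).symm.trans h)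
  have hv_g : Finsupp.linearCombination k g v = 0 := by
    have h := congrArg (LinearMap.snd k W W') hv
    rwa [Finsupp.apply_linearCombination] at h
  have hv_eq : v = s (Finsupp.linearCombination k id v) := by
    rw [← sub_eq_zero, ← coe_relationPart hs, hv_rel, Submodule.coe_zero]
  have hv_eval : Finsupp.linearCombination k id v = 0 :=
    hgs (by simpa only [← hv_eq, map_zero] using hv_g)
  rw [hv_eq, hv_eval, map_zero]

theorem exists_surjective_quotient_hamelOfSection {Z : Type*} [AddCommGroup Z] [Module k Z]
    {g : V → W'} {P : W' →ₗ[k] V × Z} (hP : Surjective P)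
    (hPs : ∀ x, P (Finsupp.linearCombination k g (s x)) = (x, 0)) :
    ∃ θ : ((W × W') ⧸ Submodule.span k (Set.range fun x => (hamelOfSection hs Φ x, g x))) →ₗ[k] Z,
      Surjective θ := by
  let τ : W × W' →ₗ[k] Z := LinearMap.snd k V Z ∘ₗ P ∘ₗ (LinearMap.snd k W W' -
    Finsupp.linearCombination k g ∘ₗ (relations k V).subtype ∘ₗ Φ.symm.toLinearMap ∘ₗ
      LinearMap.fst k W W')
  refine ⟨Submodule.liftQ _ τ (Submodule.span_le.2 ?_), fun z => ?_⟩
  · rintro _ ⟨x, rfl⟩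
    simp [τ, hamelOfSection, coe_relationPart, hPs]
  · obtain ⟨y, hy⟩ := hP (0, z)
    exact ⟨Submodule.Quotient.mk (0, y), by simp [τ, hy]⟩

end HamelOfSection

section NegOff

/-- The function which is the identity on `s` and negation off `s`. -/
noncomputable def negOff {V : Type*} [Neg V] (s : Set V) (x : V) : V := by
  classical exact if x ∈ s then x else -x

theorem negOff_of_mem {V : Type*} [Neg V] {s : Set V} {x : V} (hx : x ∈ s) : negOff s x = x :=
  if_pos hx

theorem negOff_of_notMem {V : Type*} [Neg V] {s : Set V} {x : V} (hx : x ∉ s) :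
    negOff s x = -x :=
  if_neg hx

variable {V : Type*} [InvolutiveNeg V] {s : Set V} (hs : ∀ x, -x ∈ s ↔ x ∈ s)
include hs

theorem negOff_odd : (negOff s).Odd := fun x => by
  by_cases hx : x ∈ s
  · rw [negOff_of_mem hx, negOff_of_mem ((hs x).2 hx)]
  · rw [negOff_of_notMem hx, negOff_of_notMem (mt (hs x).1 hx)]

theorem negOff_involutive : (negOff s).Involutive := fun x => by
  by_cases hx : x ∈ s
  · rw [negOff_of_mem hx, negOff_of_mem hx]
  · rw [negOff_of_notMem hx, negOff_of_notMem (mt (hs x).1 hx), neg_neg]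

end NegOff

section OddMap

variable {k V : Type*} [DivisionRing k] [AddCommGroup V] [Module k V]

theorem single_add_single_neg_mem_ker_graphMap {W : Type*} [AddCommGroup W] [Module k W] {u : V → W}
    (hu : u.Odd) (x : V) :
    (.single x 1 + .single (-x) 1 : V →₀ k) ∈ LinearMap.ker (graphMap k u) := by
  simp [graphMap, hu x]

theorem exists_surjective_of_single_add_single_neg_mem [NeZero (2 : k)] {A : Submodule k (V →₀ k)}
    (hA : ∀ x, .single x 1 + .single (-x) 1 ∈ A) : ∃ θ : A →ₗ[k] V, Surjective θ := by
  classical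
  -- `half` keeps one of `x` and `-x`, so that `half x + half (-x) = ± x` is not identically zero.
  let half (x : V) : V := if WellOrderingRel x (-x) then x else 0
  let θ := (Finsupp.linearCombination k half).domRestrict A
  have hθ (x) : θ ⟨_, hA x⟩ = half x + half (-x) := by
    simp [θ]
  refine ⟨θ, fun x => ?_⟩
  rcases trichotomous_of WellOrderingRel x (-x) with h | h | h
  · exact ⟨⟨_, hA x⟩, by rw [hθ]; simp [half, h, asymm h]⟩
  · have hx : (2 : k) • x = 0 := by rw [two_smul, ← eq_neg_iff_add_eq_zero]; exact h
    exact ⟨0, by rw [map_zero, (smul_eq_zero.1 hx).resolve_left two_ne_zero]⟩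
  · exact ⟨-⟨_, hA x⟩, (map_neg θ _).trans (by rw [hθ]; simp [half, h, asymm h])⟩

theorem le_span_compl_union [NeZero (2 : k)] {L U : Submodule k V} (hLU : Disjoint L U)
    (hU : U ≠ ⊥) : L ≤ Submodule.span k (L ∪ U : Set V)ᶜ := by
  intro x hx
  obtain ⟨y, hy, hy₀⟩ := U.ne_bot_iff.1 hU
  rcases eq_or_ne x 0 with rfl | hx₀
  · exact zero_mem _
  have hadd {z : V} (hz : z ∈ U) (hz₀ : z ≠ 0) : x + z ∈ (L ∪ U : Set V)ᶜ := by
    rintro (h | h)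
    · exact hz₀ (Submodule.disjoint_def.1 hLU z ((L.add_mem_iff_right hx).1 h) hz)
    · exact hx₀ (Submodule.disjoint_def.1 hLU x hx ((U.add_mem_iff_left hz).1 h))
  have hsum : (2 : k) • x ∈ Submodule.span k (L ∪ U : Set V)ᶜ := by
    have := add_mem (Submodule.subset_span (R := k) (hadd hy hy₀))
      (Submodule.subset_span (hadd (neg_mem hy) (neg_ne_zero.2 hy₀)))
    rwa [add_add_add_comm, add_neg_cancel, add_zero, ← two_smul k] at this
  exact (Submodule.smul_mem_iff _ two_ne_zero).1 hsum

theorem span_compl_union_eq_top [NeZero (2 : k)] {L U : Submodule k V} (hLU : IsCompl L U)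
    (hL : L ≠ ⊥) (hU : U ≠ ⊥) : Submodule.span k (L ∪ U : Set V)ᶜ = ⊤ := by
  rw [← top_le_iff, ← hLU.sup_eq_top]
  refine sup_le (le_span_compl_union hLU.disjoint hU) ?_
  rw [Set.union_comm]
  exact le_span_compl_union hLU.disjoint.symm hL

theorem surjective_graphMap_negOff [NeZero (2 : k)] {s : Set V} (hs : Submodule.span k s = ⊤)
    (hsc : Submodule.span k sᶜ = ⊤) : Surjective (graphMap k (negOff s)) := by
  rw [← LinearMap.range_eq_top, graphMap, Finsupp.range_linearCombination]
  set A := Submodule.span k (Set.range fun x => (x, negOff s x))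
  have hA (x) : (x, negOff s x) ∈ A := Submodule.subset_span ⟨x, rfl⟩
  have diag (x : V) : (x, x) ∈ A := by
    have : ⊤ ≤ A.comap (LinearMap.id.prod LinearMap.id) :=
      hs ▸ Submodule.span_le.2 fun x hx => by simpa [negOff_of_mem hx] using hA x
    exact this (Submodule.mem_top (x := x))
  have antidiag (x : V) : (x, -x) ∈ A := by
    have : ⊤ ≤ A.comap (LinearMap.id.prod (-LinearMap.id)) :=
      hsc ▸ Submodule.span_le.2 fun x hx => by simpa [negOff_of_notMem hx] using hA x
    exact this (Submodule.mem_top (x := x))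
  refine Submodule.eq_top_iff'.2 fun ⟨x, y⟩ => ?_
  have h2 : (2 : k) • (x, y) ∈ A := by
    convert add_mem (diag (x + y)) (antidiag (x - y)) using 1
    ext <;> simp only [two_smul, Prod.mk_add_mk] <;> abel
  exact (A.smul_mem_iff two_ne_zero).1 h2

theorem exists_odd_injective_surjective_graphMap [NeZero (2 : k)] (hV : 1 < Module.rank k V) :
    ∃ u : V → V, u.Odd ∧ Injective u ∧ Surjective (graphMap k u) := by
  have : Nontrivial V := rank_pos_iff_nontrivial.1 (zero_lt_one.trans hV)
  obtain ⟨x, hx⟩ := exists_ne (0 : V)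
  obtain ⟨U, hU⟩ := (k ∙ x).exists_isCompl
  have hU₀ : U ≠ ⊥ := by
    rintro rfl
    have hle : Module.rank k V ≤ 1 := rank_le_one_iff.2
      ⟨x, fun y => Submodule.mem_span_singleton.1 (eq_top_of_isCompl_bot hU ▸ Submodule.mem_top)⟩
    exact hle.not_gt hV
  have hspan : Submodule.span k ((k ∙ x) ∪ U : Set V) = ⊤ := by
    rw [Submodule.span_union, Submodule.span_eq, Submodule.span_eq, hU.sup_eq_top]
  have hneg (y) : -y ∈ ((k ∙ x) ∪ U : Set V) ↔ y ∈ ((k ∙ x) ∪ U : Set V) := by simp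
  exact ⟨_, negOff_odd hneg, (negOff_involutive hneg).injective, surjective_graphMap_negOff hspan
    (span_compl_union_eq_top hU (mt Submodule.span_singleton_eq_bot.1 hx) hU₀)⟩

end OddMap

universe u v

section Cardinality

variable {k : Type u} {V : Type v} [DivisionRing k] [AddCommGroup V] [Module k V]

theorem infinite_of_rank_eq_mk (hV : Module.rank k V = #V) : Infinite V := by
  by_contra hfin
  rw [not_infinite_iff_finite] at hfin
  have hk : 2 ≤ lift.{v} #k := by
    rw [two_le_iff_one_lt, one_lt_lift_iff, one_lt_iff_nontrivial]
    infer_instance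
  refine (cantor (lift.{u} #V)).not_ge ?_
  calc 2 ^ lift.{u} #V ≤ lift.{v} #k ^ lift.{u} #V := power_le_power_right hk
    _ = lift.{u} #V := by
      rw [← hV, ← lift_cardinalMk_eq_lift_cardinalMk_field_pow_lift_rank, hV]

theorem nonempty_linearEquiv_of_single_add_single_neg_mem [NeZero (2 : k)]
    (hV : Module.rank k V = #V) {A : Submodule k (V →₀ k)}
    (hA : ∀ x, .single x 1 + .single (-x) 1 ∈ A) : Nonempty (A ≃ₗ[k] V) := by
  obtain ⟨θ, hθ⟩ := exists_surjective_of_single_add_single_neg_mem hA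
  have : Module.Free k A := Module.Free.of_divisionRing k A
  refine nonempty_linearEquiv_of_lift_rank_eq (le_antisymm ?_ ?_)
  · refine (Cardinal.lift_le.2 A.rank_le).trans ?_
    simp [hV]
  · exact LinearMap.lift_rank_le_of_surjective θ hθ

theorem nonempty_linearEquiv_prod (hV : ℵ₀ ≤ Module.rank k V) : Nonempty (V ≃ₗ[k] V × V) :=
  nonempty_linearEquiv_of_rank_eq (by rw [rank_prod', Cardinal.add_eq_self hV])

theorem nonempty_basis_of_rank_eq_mk {ι : Type v} (h : Module.rank k V = #ι) :
    Nonempty (Module.Basis ι k V) :=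
  let b := Module.Free.chooseBasis k V
  (Cardinal.eq.1 (b.mk_eq_rank''.trans h)).map b.reindex

theorem rank_quotient_eq_of_surjective {W : Type v} [AddCommGroup W] [Module k W]
    (hV : ℵ₀ ≤ Module.rank k V) (hW : Module.rank k W ≤ Module.rank k V)
    {A : Submodule k (V × W)} {θ : ((V × W) ⧸ A) →ₗ[k] V} (hθ : Surjective θ) :
    Module.rank k ((V × W) ⧸ A) = Module.rank k V := by
  refine le_antisymm ((rank_quotient_le A).trans ?_) (θ.rank_le_of_surjective hθ)
  rw [rank_prod', add_eq_left hV hW]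

theorem mk_compl_range_hamelOfSection {X : Type*} [AddCommGroup X] [Module k X]
    {s : V →ₗ[k] V →₀ k} (hs : ∀ x, Finsupp.linearCombination k id (s x) = x)
    (Φ : relations k V ≃ₗ[k] V) {u : V → X} (hu : Injective u)
    (hus : ∀ x, Finsupp.linearCombination k u (s x) = 0) {c : relations k V} (hc₀ : c ≠ 0)
    (hc : Finsupp.linearCombination k u c = 0) :
    #↥(Set.range (hamelOfSection hs Φ))ᶜ = #V := by
  refine le_antisymm (mk_set_le _) (mk_le_of_injective
    (f := fun x => ⟨_, hamelOfSection_add_notMem_range hs Φ hu hus hc₀ hc x⟩) fun x y hxy => ?_)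
  exact hamelOfSection_injective hs Φ hu hus (add_right_cancel (congrArg Subtype.val hxy))

theorem exists_isHamelMap_linearIndependent_prodMk [NeZero (2 : k)] {W : Type*} [AddCommGroup W]
    [Module k W] (hV : Module.rank k V = #V) {g : V → W}
    (hg : LinearIndependent k fun x => (x, g x)) :
    ∃ f : V → V, IsHamelMap k f ∧ Injective f ∧ #↥(Set.range f)ᶜ = #V ∧
      (LinearIndependent k fun x => (f x, g x)) ∧
      ∃ θ : ((V × W) ⧸ Submodule.span k (Set.range fun x => (f x, g x))) →ₗ[k] V,
        Surjective θ := by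
  have : Infinite V := infinite_of_rank_eq_mk hV
  have hV₀ : ℵ₀ ≤ Module.rank k V := hV ▸ aleph0_le_mk V
  obtain ⟨u, hu_odd, hu, hu_surj⟩ :=
    exists_odd_injective_surjective_graphMap (one_lt_aleph0.trans_le hV₀)
  have hmem := single_add_single_neg_mem_ker_graphMap (k := k) hu_odd
  obtain ⟨Ψ⟩ := nonempty_linearEquiv_of_single_add_single_neg_mem hV hmem
  obtain ⟨Φ⟩ := nonempty_linearEquiv_of_single_add_single_neg_mem hV fun x =>
    ker_graphMap_le_relations u (hmem x)
  obtain ⟨e⟩ := nonempty_linearEquiv_prod hV₀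
  obtain ⟨s, P, hs, hP, hPs⟩ := exists_lift_of_disjoint_ker hu_surj
    (disjoint_ker_graphMap_ker_linearCombination hg) (Ψ.trans e) (.inl k V V) (.inl k V V)
  have hs_eval x := (graphMap_eq_iff.1 (hs x)).1
  have hus x := (graphMap_eq_iff.1 (hs x)).2
  have hgs : Injective fun x => Finsupp.linearCombination k g (s x) := fun x y hxy =>
    LinearMap.inl_injective ((hPs x).symm.trans ((congrArg P hxy).trans (hPs y)))
  have : Nontrivial (LinearMap.ker (graphMap k u)) := Ψ.toEquiv.nontrivial
  obtain ⟨⟨c, hcu⟩, hc₀⟩ := exists_ne (α := LinearMap.ker (graphMap k u)) 0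
  exact ⟨hamelOfSection hs_eval Φ, isHamelMap_hamelOfSection hs_eval Φ,
    hamelOfSection_injective hs_eval Φ hu hus,
    mk_compl_range_hamelOfSection hs_eval Φ hu hus
      (c := ⟨c, ker_graphMap_le_relations u hcu⟩) (by simpa using hc₀) (graphMap_eq_iff.1 hcu).2,
    linearIndependent_hamelOfSection_prodMk hs_eval Φ hgs,
    exists_surjective_quotient_hamelOfSection hs_eval Φ hP hPs⟩

end Cardinality

theorem stmt_9_general {k : Type u} {V W : Type v} [DivisionRing k] [NeZero (2 : k)]
    [AddCommGroup V] [Module k V] [AddCommGroup W] [Module k W] (hV : Module.rank k V = #V)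
    (hW : Module.rank k W ≤ Module.rank k V) (g : V → W)
    (hg : LinearIndependent k fun x => (x, g x)) :
    ∃ (h : V → W) (f : V → V), IsHamelMap k h ∧ IsHamelMap k f ∧ g = h ∘ f := by
  have : Infinite V := infinite_of_rank_eq_mk hV
  obtain ⟨f, hf, hf_inj, hf_compl, hfg, θ, hθ⟩ := exists_isHamelMap_linearIndependent_prodMk hV hg
  have hrank := rank_quotient_eq_of_surjective (hV ▸ aleph0_le_mk V) hW hθ
  obtain ⟨b⟩ := nonempty_basis_of_rank_eq_mk (hrank.trans (hV.trans hf_compl.symm))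
  obtain ⟨h, hh, hgh⟩ := exists_isHamelMap_comp_eq hf_inj hfg hf.span_range_eq_top b
  exact ⟨h, f, hh, hf, hgh⟩

theorem linearIndependent_coe_graph_iff {f : ℝ → ℝ} :
    LinearIndependent ℚ ((↑) : graph f → ℝ × ℝ) ↔ LinearIndependent ℚ fun x => (x, f x) :=
  linearIndepOn_id_range_iff fun _ _ h => congrArg Prod.fst h

theorem isHamelFunction_iff_isHamelMap {f : ℝ → ℝ} : IsHamelFunction f ↔ IsHamelMap ℚ f :=
  and_congr_left' linearIndependent_coe_graph_iff

theorem stmt_9 (g : ℝ → ℝ)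
    (hg : LinearIndependent ℚ ((↑) : graph g → ℝ × ℝ)) :
    ∃ h f : ℝ → ℝ, IsHamelFunction h ∧ IsHamelFunction f ∧ g = h ∘ f := by
  simp only [isHamelFunction_iff_isHamelMap]
  exact stmt_9_general (by rw [Real.rank_rat_real, mk_real]) le_rfl g
    (linearIndependent_coe_graph_iff.1 hg)
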